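/- Let 1 ≤ i ≤ m − 1 and let Λ̄ ∈ F[X] with deg Λ̄ ≤ 2^{i+1} − 1. Let P be the quotient of Λ̄ on division by s_i, and let P′ be the quotient of P on division by s_{i−1}. Then the quotient of (s_{i−1})^2 · Λ̄ on division by s_{i+1} equals P + s_{i−1}(v_{i−1}) · P′. -/

import Mathlib

open Polynomial Finset

/-- The GF(2)-linear span of `v 0, …, v (k-1)` as a `Finset`. -/
noncomputable def Vset {F : Type*} [Field F] (v : ℕ → F) (k : ℕ) : Finset F :=
  letI := Classical.decEq F
  (Finset.univ : Finset (Fin k → Bool)).image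
    (fun ε => ∑ j : Fin k, if ε j then v j else 0)

/-- The subspace polynomial `s_k(X) = ∏_{a ∈ V_k} (X - a)`. -/
noncomputable def sPoly {F : Type*} [Field F] (v : ℕ → F) (k : ℕ) : Polynomial F :=
  ∏ a ∈ Vset v k, (X - C a)

/-- The basis polynomial `X_i(X) = ∏_{j<m} s_j(X)^{i_j}`, where `i_j` is the
`j`-th binary digit of `i`. -/
noncomputable def XPoly {F : Type*} [Field F] (v : ℕ → F) (m i : ℕ) : Polynomial F :=
  ∏ j ∈ Finset.range m, (sPoly v j) ^ (Nat.testBit i j).toNat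

/-- The normalizing constant `p_i = ∏_{j<m} (s_j(v_j))^{i_j}`. -/
noncomputable def pCoef {F : Type*} [Field F] (v : ℕ → F) (m i : ℕ) : F :=
  ∏ j ∈ Finset.range m, ((sPoly v j).eval (v j)) ^ (Nat.testBit i j).toNat

/-- `v 0, …, v (m-1)` are linearly independent over the prime field GF(2). -/
def LinIndepGF2 {F : Type*} [Field F] (v : ℕ → F) (m : ℕ) : Prop :=
  ∀ ε : ℕ → Bool, (∑ j ∈ Finset.range m, if ε j then v j else 0) = 0 →
    ∀ j < m, ε j = false


theorem mem_Vset_aux {F : Type*} [Field F] (v : ℕ → F) (k : ℕ) (a : F) :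
    a ∈ Vset v k ↔ ∃ ε : ℕ → Bool, (∑ j ∈ Finset.range k, if ε j then v j else 0) = a := by
  classical
  unfold Vset
  simp only [Finset.mem_image, Finset.mem_univ, true_and]
  constructor
  · rintro ⟨ε, rfl⟩
    refine ⟨fun j => if h : j < k then ε ⟨j, h⟩ else false, ?_⟩
    rw [Finset.sum_range]
    apply Finset.sum_congr rfl
    intro j _
    simp
  · rintro ⟨ε, rfl⟩
    refine ⟨fun j => ε j, ?_⟩
    rw [Finset.sum_range]

theorem sPoly_zero_aux {F : Type*} [Field F] (v : ℕ → F) : sPoly v 0 = X := by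
  have : Vset v 0 = {0} := by
    ext a
    rw [mem_Vset_aux]
    simp only [Finset.range_zero, Finset.sum_empty, Finset.mem_singleton]
    exact ⟨fun ⟨_, h⟩ => h.symm, fun h => ⟨fun _ => false, h.symm⟩⟩
  simp [sPoly, this]

theorem Vset_succ_aux {F : Type*} [Field F] [DecidableEq F] (v : ℕ → F) (k : ℕ) :
    Vset v (k + 1) = Vset v k ∪ (Vset v k).image (fun a => a + v k) := by
  ext a
  simp only [Finset.mem_union, Finset.mem_image, mem_Vset_aux]
  constructor
  · rintro ⟨ε, rfl⟩
    rw [Finset.sum_range_succ]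
    cases h : ε k
    · left
      exact ⟨ε, by simp⟩
    · right
      exact ⟨_, ⟨ε, rfl⟩, by simp⟩
  · rintro (⟨ε, rfl⟩ | ⟨_, ⟨ε, rfl⟩, rfl⟩)
    · refine ⟨fun j => if j < k then ε j else false, ?_⟩
      rw [Finset.sum_range_succ]
      simp only [lt_irrefl, if_false, Bool.false_eq_true, add_zero]
      apply Finset.sum_congr rfl
      intro j hj
      simp [Finset.mem_range.1 hj]
    · refine ⟨fun j => if j < k then ε j else true, ?_⟩
      rw [Finset.sum_range_succ]
      simp only [lt_irrefl, if_false, if_true]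
      congr 1
      apply Finset.sum_congr rfl
      intro j hj
      simp [Finset.mem_range.1 hj]

theorem Vset_disj_aux {F : Type*} [Field F] [CharP F 2] [DecidableEq F] (m : ℕ) (v : ℕ → F)
    (hv : LinIndepGF2 v m) (k : ℕ) (hk : k < m) :
    Disjoint (Vset v k) ((Vset v k).image (fun a => a + v k)) := by
  rw [Finset.disjoint_left]
  intro a ha hb
  simp only [Finset.mem_image, mem_Vset_aux] at ha hb
  obtain ⟨ε, rfl⟩ := ha
  obtain ⟨_, ⟨δ, rfl⟩, h⟩ := hb
  let η : ℕ → Bool := fun j => if j < k then xor (ε j) (δ j) else decide (j = k)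
  have key : (∑ j ∈ Finset.range m, if η j then v j else 0) = 0 := by
    have h1 : (∑ j ∈ Finset.range (k+1), if η j then v j else 0)
        = ∑ j ∈ Finset.range m, if η j then v j else 0 := by
      apply Finset.sum_subset
      · intro j; simp only [Finset.mem_range]; omega
      · intro j _ hj
        simp only [Finset.mem_range] at hj
        have h1 : ¬ j < k := by omega
        have h2 : j ≠ k := by omega
        simp [η, h1, h2]
    rw [← h1, Finset.sum_range_succ]
    have h2 : (∑ j ∈ Finset.range k, if η j then v j else 0)
        = (∑ j ∈ Finset.range k, if ε j then v j else 0)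
          + ∑ j ∈ Finset.range k, if δ j then v j else 0 := by
      rw [← Finset.sum_add_distrib]
      apply Finset.sum_congr rfl
      intro j hj
      have hj' := Finset.mem_range.1 hj
      simp only [η, hj', if_true]
      cases ε j <;> cases δ j <;> simp [CharTwo.add_self_eq_zero]
    rw [h2, ← h]
    have h3 : η k = true := by simp [η]
    rw [h3]
    simp only [if_true]
    generalize (∑ j ∈ Finset.range k, if δ j then v j else 0) = y
    have : y + v k + y + v k = (y + y) + (v k + v k) := by ring
    rw [this, CharTwo.add_self_eq_zero, CharTwo.add_self_eq_zero, add_zero]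
  have := hv η key k hk
  simp [η] at this

theorem sPoly_prod_aux {F : Type*} [Field F] [CharP F 2] (m : ℕ) (v : ℕ → F)
    (hv : LinIndepGF2 v m) (k : ℕ) (hk : k < m) :
    sPoly v (k + 1) = sPoly v k * (sPoly v k).comp (X + C (v k)) := by
  classical
  unfold sPoly
  rw [Vset_succ_aux, Finset.prod_union (Vset_disj_aux m v hv k hk),
    Finset.prod_image (fun a _ b _ h => add_right_cancel h), Polynomial.prod_comp]
  congr 1
  apply Finset.prod_congr rfl
  intro a _
  have : (C (v k) : F[X]) = - C (v k) := by
    rw [← C_neg, CharTwo.neg_eq]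
  simp only [sub_comp, X_comp, C_comp, C_add]
  nth_rewrite 1 [this]
  ring

theorem sPoly_comp_aux {F : Type*} [Field F] [CharP F 2] (m : ℕ) (v : ℕ → F)
    (hv : LinIndepGF2 v m) (k : ℕ) (hk : k ≤ m) (c : F) :
    (sPoly v k).comp (X + C c) = sPoly v k + C ((sPoly v k).eval c) := by
  induction k generalizing c with
  | zero => simp [sPoly_zero_aux]
  | succ k ih =>
    have ih' := ih (by omega)
    rw [sPoly_prod_aux m v hv k (by omega), ih' (v k)]
    simp only [mul_comp, add_comp, C_comp, ih' c, eval_mul, eval_add, eval_C, C_mul, C_add]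
    have h2 : (2 : F[X]) = 0 := CharTwo.two_eq_zero
    linear_combination (sPoly v k * C ((sPoly v k).eval c)) * h2

theorem sPoly_succ_aux {F : Type*} [Field F] [CharP F 2] (m : ℕ) (v : ℕ → F)
    (hv : LinIndepGF2 v m) (k : ℕ) (hk : k < m) :
    sPoly v (k + 1) = sPoly v k ^ 2 + C ((sPoly v k).eval (v k)) * sPoly v k := by
  rw [sPoly_prod_aux m v hv k hk, sPoly_comp_aux m v hv k hk.le]
  ring

theorem sPoly_monic_aux {F : Type*} [Field F] (v : ℕ → F) (k : ℕ) : (sPoly v k).Monic :=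
  monic_prod_of_monic _ _ (fun a _ => monic_X_sub_C a)

theorem sPoly_natDegree_aux {F : Type*} [Field F] [CharP F 2] (m : ℕ) (v : ℕ → F)
    (hv : LinIndepGF2 v m) (k : ℕ) (hk : k ≤ m) : (sPoly v k).natDegree = 2 ^ k := by
  induction k with
  | zero => simp [sPoly_zero_aux]
  | succ k ih =>
    rw [sPoly_prod_aux m v hv k (by omega), natDegree_mul, natDegree_comp, ih (by omega)]
    · simp [pow_succ, mul_two]
    · exact (sPoly_monic_aux v k).ne_zero
    · exact ((sPoly_monic_aux v k).comp (monic_X_add_C _) (by simp)).ne_zero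

/-- for `1 ≤ i ≤ m - 1` and `deg Λ̄ ≤ 2^(i+1) - 1`, the quotient of
`(s_(i-1))^2·Λ̄` by `s_(i+1)` equals `P + s_(i-1)(v_(i-1))·P'`, where `P` is the
quotient of `Λ̄` by `s_i` and `P'` the quotient of `P` by `s_(i-1)`. -/
theorem quotient_decomposition {F : Type*} [Field F] [Fintype F] (m : ℕ) (hm : 1 ≤ m)
    (hcard : Fintype.card F = 2 ^ m) (v : ℕ → F) (hv : LinIndepGF2 v m)
    (i : ℕ) (hi1 : 1 ≤ i) (him : i + 1 ≤ m)
    (Λbar : Polynomial F) (hΛbar : Λbar.degree ≤ ((2 ^ (i + 1) - 1 : ℕ) : WithBot ℕ)) :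
    ((sPoly v (i - 1)) ^ 2 * Λbar) /ₘ sPoly v (i + 1)
      = Λbar /ₘ sPoly v i
        + C ((sPoly v (i - 1)).eval (v (i - 1)))
            * ((Λbar /ₘ sPoly v i) /ₘ sPoly v (i - 1)) := by
  have h20 : (2 : F) = 0 := by
    have h := Nat.cast_card_eq_zero F
    rw [hcard] at h
    push_cast at h
    exact pow_eq_zero_iff (by omega) |>.1 h
  haveI : CharP F 2 := CharTwo.of_one_ne_zero_of_two_eq_zero one_ne_zero h20
  obtain ⟨n, rfl⟩ : ∃ n, i = n + 1 := ⟨i - 1, by omega⟩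
  simp only [Nat.add_sub_cancel]
  have e1 := sPoly_succ_aux m v hv n (by omega)
  have e2 := sPoly_succ_aux m v hv (n + 1) (by omega)
  have d0 := sPoly_natDegree_aux m v hv n (by omega)
  have d1 := sPoly_natDegree_aux m v hv (n + 1) (by omega)
  have d2 := sPoly_natDegree_aux m v hv (n + 1 + 1) (by omega)
  have m0 := sPoly_monic_aux v n
  have m1 := sPoly_monic_aux v (n + 1)
  have m2 := sPoly_monic_aux v (n + 1 + 1)
  have p1 : 2 ^ (n + 1) = 2 * 2 ^ n := by ring
  have p2 : 2 ^ (n + 1 + 1) = 4 * 2 ^ n := by ring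
  have hN : 0 < 2 ^ n := by positivity
  generalize hNN : 2 ^ n = N at *
  rw [p1] at d1
  rw [p2] at d2 hΛbar
  set t := sPoly v n
  set s := sPoly v (n + 1)
  set u := sPoly v (n + 1 + 1)
  set a := t.eval (v n)
  set b := s.eval (v (n + 1))
  have hL : Λbar.natDegree ≤ 4 * N - 1 := natDegree_le_of_degree_le hΛbar
  set P := Λbar /ₘ s with hP
  set Q := P /ₘ t with hQ
  set R := Λbar %ₘ s with hR
  set S := P %ₘ t with hS
  have f1 : R + s * P = Λbar := modByMonic_add_div _ _
  have f2 : S + t * Q = P := modByMonic_add_div _ _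
  have dR : R.natDegree < 2 * N := by
    rw [← d1]; exact natDegree_modByMonic_lt _ m1 (fun h => by rw [h] at d1; simp at d1; omega)
  have dS : S.natDegree < N := by
    rw [← d0]; exact natDegree_modByMonic_lt _ m0 (fun h => by rw [h] at d0; simp at d0; omega)
  have dP : P.natDegree ≤ 2 * N - 1 := by
    rw [hP, natDegree_divByMonic _ m1]; omega
  have dQ : Q.natDegree ≤ N - 1 := by
    rw [hQ, natDegree_divByMonic _ m0]; omega
  have h2 : (2 : F[X]) = 0 := CharTwo.two_eq_zero
  refine (div_modByMonic_unique (P + C a * Q)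
    (t ^ 2 * R + C b * (P * s) + C a * (t * S * s) + C (a * b) * (Q * s) + C (a ^ 2) * (Q * t * s))
    m2 ⟨?_, ?_⟩).1
  · simp only [C_mul, C_pow]
    linear_combination (P + C a * Q) * e2 + t ^ 2 * f1 + (s * P + C a * s * Q) * e1
      + C a * t * s * f2
      + (C b * P * s + C a * C b * Q * s + C a ^ 2 * Q * t * s + C a * t * s * P) * h2
  · rw [degree_eq_natDegree m2.ne_zero, d2]
    apply lt_of_le_of_lt (b := ((4 * N - 1 : ℕ) : WithBot ℕ))
    · apply degree_le_of_natDegree_le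
      have c (x : F) (p : F[X]) (h : p.natDegree ≤ 4 * N - 1) :
          (C x * p).natDegree ≤ 4 * N - 1 := (natDegree_C_mul_le x p).trans h
      refine natDegree_add_le_of_degree_le (natDegree_add_le_of_degree_le
        (natDegree_add_le_of_degree_le (natDegree_add_le_of_degree_le ?_ (c _ _ ?_)) (c _ _ ?_))
          (c _ _ ?_)) (c _ _ ?_)
      · have := natDegree_mul_le (p := t ^ 2) (q := R)
        have := natDegree_pow_le (p := t) (n := 2)
        omega
      · have := natDegree_mul_le (p := P) (q := s)
        omega
      · have := natDegree_mul_le (p := t * S) (q := s)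
        have := natDegree_mul_le (p := t) (q := S)
        omega
      · have := natDegree_mul_le (p := Q) (q := s)
        omega
      · have := natDegree_mul_le (p := Q * t) (q := s)
        have := natDegree_mul_le (p := Q) (q := t)
        omega
    · exact_mod_cast (by omega : 4 * N - 1 < 4 * N)
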